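/- Let (T, f) be a dynamical system on a tree, F the induced map on the functional envelope (the closure of the space of continuous self-maps of T in the Hausdorff metric on graphs), and 𝓕 the induced map on Con(T). Then for every ε > 0 and n ≥ 1: sep(n, f, ε)^{N₁(ε)} ≤ sep(n, F, ε) ≤ span(n, 𝓕, ε/2)^{N₂(ε)}, where N₁(ε), N₂(ε) do not depend on n and N₁(ε), N₂(ε) → +∞ as ε → 0+. Here one may take N₂(ε) to be the minimal number of subcontinua of diameter < ε covering T, and N₁(ε) = ⌊1/(2ε)⌋ − 1. -/

import Mathlib

open Set Filter Metric Topology TopologicalSpace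

/-- An arc: a subset homeomorphic to `[0,1]`. -/
def IsArc {T : Type*} [TopologicalSpace T] (A : Set T) : Prop :=
  Nonempty (↥(Set.Icc (0:ℝ) 1) ≃ₜ ↥A)

/-- An arc with endpoints `x` and `y`. -/
def IsArcBetween {T : Type*} [TopologicalSpace T] (A : Set T) (x y : T) : Prop :=
  ∃ e : ↥(Set.Icc (0:ℝ) 1) ≃ₜ ↥A,
    ((e ⟨0, by norm_num⟩ : ↥A) : T) = x ∧ ((e ⟨1, by norm_num⟩ : ↥A) : T) = y

/-- A tree: a continuum which is uniquely arcwise connected and is a point or a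
union of finitely many arcs. -/
structure IsTreeSpace (T : Type*) [MetricSpace T] : Prop where
  compact : CompactSpace T
  conn : ConnectedSpace T
  uniqueArc : ∀ x y : T, x ≠ y → ∃! A : Set T, IsArcBetween A x y
  finiteArcs : (∃ x : T, (Set.univ : Set T) = {x}) ∨
    ∃ s : Finset (Set T), (∀ A ∈ s, IsArc A) ∧ ⋃₀ (s : Set (Set T)) = Set.univ

/-- The unique arc from `x` to `y` in a tree. -/
noncomputable def treeArc {T : Type*} [MetricSpace T] (hT : IsTreeSpace T) (x y : T) :
    Set T := by
  classical exact if h : x = y then {x} else (hT.uniqueArc x y h).choose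

/-- `Comp B x` : the connected component of `x` in `B` if `x ∈ B`, else `{x}`. -/
noncomputable def Comp {T : Type*} [TopologicalSpace T] (B : Set T) (x : T) : Set T := by
  classical exact if x ∈ B then connectedComponentIn B x else {x}

/-- `x` is an endpoint of the whole space (valence one). -/
def IsEnd {T : Type*} [TopologicalSpace T] (x : T) : Prop :=
  IsConnected ({x}ᶜ : Set T)

/-- `x` is a cut-point of the whole space (valence at least two). -/
def IsCut {T : Type*} [TopologicalSpace T] (x : T) : Prop :=
  ¬ IsPreconnected ({x}ᶜ : Set T)

/-- `x` is an endpoint of the subspace `S` (valence one in `S`). -/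
def IsEndpointOf {T : Type*} [TopologicalSpace T] (S : Set T) (x : T) : Prop :=
  x ∈ S ∧ IsConnected (S \ {x})

/-- A subcontinuum: a nonempty compact connected subset. -/
def IsSubcontinuum {T : Type*} [TopologicalSpace T] (A : Set T) : Prop :=
  A.Nonempty ∧ IsCompact A ∧ IsConnected A

/-- Attracting fixed point. -/
def IsAFP {T : Type*} [TopologicalSpace T] (f : T → T) (x : T) : Prop :=
  f x = x ∧ ∀ U : Set T, IsOpen U → x ∈ U →
    ∃ V : Set T, IsOpen V ∧ x ∈ V ∧ V ⊆ U ∧ f '' closure V ⊆ V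

/-- `A` is asymptotically periodic under `f`: for some `p ≥ 1` the sequence
`f^{pn}(A)` converges in the Hausdorff metric (to a nonempty compact set). -/
def AsympPeriodic {T : Type*} [MetricSpace T] (f : T → T) (A : Set T) : Prop :=
  ∃ p : ℕ, 1 ≤ p ∧ ∃ L : Set T, L.Nonempty ∧ IsCompact L ∧
    Tendsto (fun n : ℕ => hausdorffDist (f^[p * n] '' A) L) atTop (𝓝 0)

/-- Kuratowski lower limit of a sequence of sets. -/
def KLiminf {T : Type*} [TopologicalSpace T] (A : ℕ → Set T) : Set T :=
  {x | ∀ U : Set T, IsOpen U → x ∈ U → ∀ᶠ n in atTop, (U ∩ A n).Nonempty}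

/-- Kuratowski upper limit of a sequence of sets. -/
def KLimsup {T : Type*} [TopologicalSpace T] (A : ℕ → Set T) : Set T :=
  {x | ∀ U : Set T, IsOpen U → x ∈ U → ∃ᶠ n in atTop, (U ∩ A n).Nonempty}

/-- Convergence in the hyperspace: the Kuratowski lower and upper limits agree. -/
def KConv {T : Type*} [TopologicalSpace T] (A : ℕ → Set T) : Prop :=
  KLiminf A = KLimsup A

/-- Set-theoretic limit superior of the iterated images of `A`. -/
def Ls {T : Type*} (f : T → T) (A : Set T) : Set T :=
  ⋂ m : ℕ, ⋃ n : ℕ, ⋃ (_ : m ≤ n), f^[n] '' A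

/-- The hyperspace of subcontinua of `T`, with the Hausdorff metric. -/
abbrev SubCon (T : Type*) [MetricSpace T] :=
  {A : NonemptyCompacts T // IsConnected (A.1 : Set T)}

/-- The induced map on the hyperspace of subcontinua. -/
noncomputable def indCon {T : Type*} [MetricSpace T] (f : T → T) (hf : Continuous f) :
    SubCon T → SubCon T :=
  fun A => ⟨⟨⟨f '' (A.1 : Set T), A.1.isCompact.image hf⟩, A.1.nonempty.image f⟩,
    A.2.image f hf.continuousOn⟩

/-- Topological entropy (Bowen–Dinaburg) of `f` on the subset `S`. -/
noncomputable def entropyOn {X : Type*} [MetricSpace X] (f : X → X) (S : Set X) : EReal :=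
  Dynamics.coverEntropy f S

/-- Topological entropy of `f`. -/
noncomputable def entropy {X : Type*} [MetricSpace X] (f : X → X) : EReal :=
  Dynamics.coverEntropy f Set.univ

/-- Maximal cardinality of an `(n,f,ε)`-separated subset of `S`. -/
noncomputable def sepNumOn {X : Type*} [MetricSpace X] (f : X → X) (S : Set X)
    (n : ℕ) (ε : ℝ) : ℕ :=
  sSup {k : ℕ | ∃ E : Finset X, ↑E ⊆ S ∧
    (∀ x ∈ E, ∀ y ∈ E, x ≠ y → ∃ j < n, ε < dist (f^[j] x) (f^[j] y)) ∧ E.card = k}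

/-- Minimal cardinality of an `(n,f,ε)`-spanning subset of `S`. -/
noncomputable def spanNumOn {X : Type*} [MetricSpace X] (f : X → X) (S : Set X)
    (n : ℕ) (ε : ℝ) : ℕ :=
  sInf {k : ℕ | ∃ F : Finset X, ↑F ⊆ S ∧
    (∀ x ∈ S, ∃ y ∈ F, ∀ j < n, dist (f^[j] x) (f^[j] y) ≤ ε) ∧ F.card = k}

noncomputable def sepNum {X : Type*} [MetricSpace X] (f : X → X) (n : ℕ) (ε : ℝ) : ℕ :=
  sepNumOn f Set.univ n ε

noncomputable def spanNum {X : Type*} [MetricSpace X] (f : X → X) (n : ℕ) (ε : ℝ) : ℕ :=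
  spanNumOn f Set.univ n ε

/-- The graph of a map. -/
def graphOf {X : Type*} (φ : X → X) : Set (X × X) := {p | p.2 = φ p.1}

/-- The functional envelope: the closure, in the hyperspace of nonempty compact
subsets of `X × X` with the Hausdorff metric, of the set of graphs of continuous
self-maps of `X`. -/
def FunctionalEnvelope (X : Type*) [MetricSpace X] :
    Set (NonemptyCompacts (X × X)) :=
  closure {G : NonemptyCompacts (X × X) | ∃ φ : X → X, Continuous φ ∧
    (G : Set (X × X)) = graphOf φ}

/-- `F` is the map induced by `f` on the functional envelope:
`F(φ) = f ∘ φ`, i.e. on graphs, `F(G) = (id × f)(G)`. -/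
def IsEnvelopeMap {X : Type*} [MetricSpace X] (f : X → X)
    (F : ↥(FunctionalEnvelope X) → ↥(FunctionalEnvelope X)) : Prop :=
  ∀ G : ↥(FunctionalEnvelope X),
    ((F G : NonemptyCompacts (X × X)) : Set (X × X)) =
      Prod.map id f '' ((G : NonemptyCompacts (X × X)) : Set (X × X))

/-- The setoid on `T` identifying all points of `M` (so that `Quotient` is `T/M`). -/
def collapseSetoid {T : Type*} (M : Set T) : Setoid T where
  r a b := a = b ∨ (a ∈ M ∧ b ∈ M)
  iseqv := by
    refine ⟨fun a => Or.inl rfl, ?_, ?_⟩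
    · rintro a b (rfl | ⟨h1, h2⟩)
      exacts [Or.inl rfl, Or.inr ⟨h2, h1⟩]
    · rintro a b c (rfl | ⟨h1, h2⟩) h
      · exact h
      · rcases h with rfl | ⟨h3, h4⟩
        exacts [Or.inr ⟨h1, h2⟩, Or.inr ⟨h1, h4⟩]

/-!
Upper bound: a set-valued map in the envelope sends subcontinua to subcontinua. Indeed, if the image
of `C` were separated by two open sets, then so would be the image of a connected neighbourhood of
`C` under some continuous map with a nearby graph. The images of the pieces of a cover by
`ε`-small subcontinua determine the graph up to `ε`, and taking the image of a fixed piece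
semiconjugates `F` to the induced map `indCon f`. Hence a spanning set of `indCon f` of size `k` and
a cover of size `N` allow at most `k ^ N` separated points of `F`.

Lower bound: in place of `⌊1/(2ε)⌋ - 1` we take the maximal number of points with pairwise distances
greater than `2ε`. The closed `ε`-balls around such points are disjoint, and there is a continuous
map taking an arbitrarily prescribed constant value on each of them. If the prescribed values run
through a separated set of `f`, then the graphs are separated by `F`.

Both exponents tend to infinity because a nondegenerate continuum is infinite. A tree is path
connected by its arcs, and locally connected because a finite union of arcs is a quotient of a
disjoint union of intervals.
-/

section HausdorffDistance

variable {X : Type*} [MetricSpace X] {K L : NonemptyCompacts X} {r : ℝ}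

lemma exists_dist_le_of_dist_nonemptyCompacts_le (h : dist K L ≤ r) {p : X} (hp : p ∈ K) :
    ∃ q ∈ L, dist p q ≤ r := by
  obtain ⟨q, hq, hpq⟩ := L.isCompact.exists_infDist_eq_dist L.nonempty p
  refine ⟨q, hq, hpq ▸ (infDist_le_hausdorffDist_of_mem hp ?_).trans h⟩
  exact hausdorffEDist_ne_top_of_nonempty_of_bounded K.nonempty L.nonempty
    K.isCompact.isBounded L.isCompact.isBounded

lemma dist_nonemptyCompacts_le_iff (hr : 0 ≤ r) :
    dist K L ≤ r ↔ (∀ p ∈ K, ∃ q ∈ L, dist p q ≤ r) ∧ ∀ q ∈ L, ∃ p ∈ K, dist q p ≤ r :=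
  ⟨fun h => ⟨fun _ => exists_dist_le_of_dist_nonemptyCompacts_le h,
      fun _ => exists_dist_le_of_dist_nonemptyCompacts_le (dist_comm K L ▸ h)⟩,
    fun h => hausdorffDist_le_of_mem_dist hr h.1 h.2⟩

end HausdorffDistance

section SeparatedSpanning

variable {X Y : Type*} [MetricSpace X] [MetricSpace Y] {g : X → X} {n : ℕ} {ε : ℝ}

/-- The `(n, g, ε)`-separated sets: the finite sets counted by `sepNum g n ε`. -/
def IsOrbitSeparated (g : X → X) (n : ℕ) (ε : ℝ) (E : Finset X) : Prop :=
  (E : Set X).Pairwise fun x y => ∃ j < n, ε < dist (g^[j] x) (g^[j] y)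

/-- The `(n, g, ε)`-spanning sets: the finite sets counted by `spanNum g n ε`. -/
def IsOrbitSpanning (g : X → X) (n : ℕ) (ε : ℝ) (S : Finset X) : Prop :=
  ∀ x, ∃ y ∈ S, ∀ j < n, dist (g^[j] x) (g^[j] y) ≤ ε

lemma exists_isOrbitSpanning (hX : TotallyBounded (univ : Set X)) (hg : UniformContinuous g)
    (n : ℕ) (hε : 0 < ε) : ∃ S, IsOrbitSpanning g n ε S := by
  have horbit : UniformContinuous fun x (j : Fin n) => g^[j] x :=
    uniformContinuous_pi.2 fun j => UniformContinuous.iterate g j hg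
  obtain ⟨δ, hδ, hclose⟩ := Metric.uniformContinuous_iff.1 horbit ε hε
  obtain ⟨t, ht, hcov⟩ := Metric.totallyBounded_iff.1 hX δ hδ
  refine ⟨ht.toFinset, fun x => ?_⟩
  obtain ⟨y, hy, hxy⟩ := mem_iUnion₂.1 (hcov (mem_univ x))
  exact ⟨y, ht.mem_toFinset.2 hy,
    fun j hj => (dist_le_pi_dist _ _ (⟨j, hj⟩ : Fin n)).trans (hclose hxy).le⟩

lemma spanNum_eq_sInf (g : X → X) (n : ℕ) (ε : ℝ) :
    spanNum g n ε = sInf {k | ∃ S, IsOrbitSpanning g n ε S ∧ S.card = k} := by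
  simp [spanNum, spanNumOn, IsOrbitSpanning]

lemma sepNum_eq_sSup (g : X → X) (n : ℕ) (ε : ℝ) :
    sepNum g n ε = sSup {k | ∃ E, IsOrbitSeparated g n ε E ∧ E.card = k} := by
  simp [sepNum, sepNumOn, IsOrbitSeparated, Set.Pairwise]

lemma exists_isOrbitSpanning_card_eq_spanNum (h : ∃ S, IsOrbitSpanning g n ε S) :
    ∃ S, IsOrbitSpanning g n ε S ∧ S.card = spanNum g n ε := by
  obtain ⟨S, hS⟩ := h
  rw [spanNum_eq_sInf]
  exact Nat.sInf_mem (s := {k | ∃ S, IsOrbitSpanning g n ε S ∧ S.card = k}) ⟨_, S, hS, rfl⟩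

lemma isOrbitSeparated_empty (g : X → X) (n : ℕ) (ε : ℝ) : IsOrbitSeparated g n ε ∅ := by
  simp [IsOrbitSeparated]

lemma sepNum_le {b : ℕ} (h : ∀ E, IsOrbitSeparated g n ε E → E.card ≤ b) :
    sepNum g n ε ≤ b := by
  rw [sepNum_eq_sSup]
  refine csSup_le ⟨_, ∅, isOrbitSeparated_empty g n ε, rfl⟩ ?_
  rintro _ ⟨E, hE, rfl⟩
  exact h E hE

lemma IsOrbitSeparated.card_le_sepNum {b : ℕ}
    (h : ∀ E, IsOrbitSeparated g n ε E → E.card ≤ b) {E : Finset X}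
    (hE : IsOrbitSeparated g n ε E) : E.card ≤ sepNum g n ε := by
  rw [sepNum_eq_sSup]
  refine le_csSup ⟨b, ?_⟩ ⟨E, hE, rfl⟩
  rintro _ ⟨E, hE, rfl⟩
  exact h E hE

-- If the cardinalities are unbounded, then `sepNum` is the junk value `sSup = 0`, attained by `∅`.
lemma exists_isOrbitSeparated_card_eq_sepNum (g : X → X) (n : ℕ) (ε : ℝ) :
    ∃ E, IsOrbitSeparated g n ε E ∧ E.card = sepNum g n ε := by
  rw [sepNum_eq_sSup]
  let cards := {k | ∃ E, IsOrbitSeparated g n ε E ∧ E.card = k}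
  by_cases hbdd : BddAbove cards
  · exact Nat.sSup_mem (s := cards) ⟨_, ∅, isOrbitSeparated_empty g n ε, rfl⟩ hbdd
  · exact ⟨∅, isOrbitSeparated_empty g n ε, (Nat.sSup_of_not_bddAbove hbdd).symm⟩

-- Sending `x` to a family of points of `S` that shadow the points `Φ i x` is injective on `E`.
lemma IsOrbitSeparated.card_le_card_pow {ι : Type*} [Fintype ι] {h : Y → Y} {Φ : ι → X → Y}
    (hΦ : ∀ i, Function.Semiconj (Φ i) g h)
    (hdist : ∀ x x', (∀ i, dist (Φ i x) (Φ i x') ≤ ε) → dist x x' ≤ ε)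
    {S : Finset Y} (hS : IsOrbitSpanning h n (ε / 2) S) {E : Finset X}
    (hE : IsOrbitSeparated g n ε E) : E.card ≤ S.card ^ Fintype.card ι := by
  classical
  choose σ hσS hσ using hS
  suffices h_inj : InjOn (fun x i => σ (Φ i x)) (E : Set X) by
    calc E.card ≤ (Fintype.piFinset fun _ : ι => S).card :=
          Finset.card_le_card_of_injOn _ (fun x _ => Fintype.mem_piFinset.2 fun i => hσS _) h_inj
      _ = S.card ^ Fintype.card ι := by simp
  intro x hx x' hx' heq
  by_contra hne
  obtain ⟨j, hj, hlt⟩ := hE hx hx' hne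
  refine hlt.not_ge (hdist _ _ fun i => ?_)
  rw [(hΦ i).iterate_right j x, (hΦ i).iterate_right j x']
  have hx_near := hσ (Φ i x) j hj
  have hx'_near := hσ (Φ i x') j hj
  rw [← show σ (Φ i x) = σ (Φ i x') from congrFun heq i] at hx'_near
  linarith [dist_triangle_right (h^[j] (Φ i x)) (h^[j] (Φ i x')) (h^[j] (σ (Φ i x)))]

lemma IsOrbitSeparated.card_le {S E : Finset X} (hS : IsOrbitSpanning g n (ε / 2) S)
    (hE : IsOrbitSeparated g n ε E) : E.card ≤ S.card := by
  simpa using hE.card_le_card_pow (ι := Unit) (Φ := fun _ => id) (fun _ => .id_left)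
    (fun _ _ h => h ()) hS

lemma sepNum_of_subsingleton [Nonempty X] [Subsingleton X] (g : X → X) (n : ℕ) (ε : ℝ) :
    sepNum g n ε = 1 := by
  have hbound : ∀ E, IsOrbitSeparated g n ε E → E.card ≤ 1 :=
    fun E _ => Finset.card_le_one_of_subsingleton E
  obtain ⟨x⟩ := ‹Nonempty X›
  have hx : IsOrbitSeparated g n ε {x} := by simp [IsOrbitSeparated]
  exact (sepNum_le hbound).antisymm (hx.card_le_sepNum hbound)

lemma spanNum_of_subsingleton [Nonempty X] [Subsingleton X] (g : X → X) (n : ℕ) (hε : 0 ≤ ε) :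
    spanNum g n ε = 1 := by
  obtain ⟨x⟩ := ‹Nonempty X›
  have hx : IsOrbitSpanning g n ε {x} := fun y => ⟨x, by simp, fun j _ => by
    rwa [Subsingleton.elim y x, dist_self]⟩
  obtain ⟨S, hS, hcard⟩ := exists_isOrbitSpanning_card_eq_spanNum ⟨_, hx⟩
  obtain ⟨y, hy, -⟩ := hS x
  rw [← hcard]
  exact (Finset.card_le_one_of_subsingleton S).antisymm (Finset.card_pos.2 ⟨y, hy⟩)

end SeparatedSpanning

section PackingCovering

variable {X T : Type*} [MetricSpace X] [MetricSpace T] {ε : ℝ}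

/-- The packing number: the maximal number of points of `X` with pairwise distances greater
than `ε`. For a single time step these are the separated sets of any map of `X`; taking the
identity makes the facts about `sepNum` available, including the junk value `0` if there is no
maximum. -/
noncomputable def packingNum (X : Type*) [MetricSpace X] (ε : ℝ) : ℕ :=
  sepNum (id : X → X) 1 ε

lemma isOrbitSeparated_id_one_iff {E : Finset X} :
    IsOrbitSeparated id 1 ε E ↔ (E : Set X).Pairwise fun x y => ε < dist x y := by
  simp [IsOrbitSeparated]

lemma exists_card_eq_packingNum (X : Type*) [MetricSpace X] (ε : ℝ) : ∃ P : Finset X,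
    (P : Set X).Pairwise (fun x y => ε < dist x y) ∧ P.card = packingNum X ε := by
  simpa only [isOrbitSeparated_id_one_iff, packingNum] using
    exists_isOrbitSeparated_card_eq_sepNum (id : X → X) 1 ε

lemma tendsto_packingNum_atTop [Infinite X] (hX : TotallyBounded (univ : Set X)) :
    Tendsto (packingNum X) (𝓝[>] 0) atTop := by
  refine tendsto_atTop.2 fun k => ?_
  obtain ⟨P, hP⟩ := Infinite.exists_subset_card_eq X k
  have hsep : ∀ᶠ ε in 𝓝[>] (0 : ℝ), ∀ x ∈ P, ∀ y ∈ P, x ≠ y → ε < dist x y := by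
    simp only [Finset.eventually_all, eventually_imp_distrib_left]
    exact fun x _ y _ hxy => nhdsWithin_le_nhds (Iio_mem_nhds (dist_pos.2 hxy))
  filter_upwards [hsep, self_mem_nhdsWithin] with ε hε hpos
  obtain ⟨S, hS⟩ := exists_isOrbitSpanning hX uniformContinuous_id 1 (half_pos hpos)
  exact hP ▸ IsOrbitSeparated.card_le_sepNum (fun E hE => hE.card_le hS)
    (isOrbitSeparated_id_one_iff.2 fun x hx y hy => hε x hx y hy)

/-- The covers of `T` by finitely many subcontinua of diameter less than `ε`. -/
def IsContinuumCover (s : Finset (SubCon T)) (ε : ℝ) : Prop :=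
  (∀ B ∈ s, diam (B.1 : Set T) < ε) ∧ ∀ x, ∃ B ∈ s, x ∈ B.1

/-- The minimal number of subcontinua of diameter less than `ε` covering `T`: this is `N₂(ε)` in
the paper. It is the junk value `0` if there is no finite cover of this kind. -/
noncomputable def continuumCoverNum (T : Type*) [MetricSpace T] (ε : ℝ) : ℕ :=
  sInf {k | ∃ s : Finset (SubCon T), IsContinuumCover s ε ∧ s.card = k}

variable [CompactSpace T] [LocallyConnectedSpace T]

lemma exists_subCon_mem_nhds_diam_lt (hε : 0 < ε) (x : T) :
    ∃ B : SubCon T, (B.1 : Set T) ∈ 𝓝 x ∧ diam (B.1 : Set T) < ε := by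
  set C := closure (connectedComponentIn (ball x (ε / 3)) x)
  have hx : x ∈ ball x (ε / 3) := mem_ball_self (by positivity)
  have hC : IsConnected C := (isConnected_connectedComponentIn_iff.2 hx).closure
  have hdiam : diam C ≤ 2 * (ε / 3) := diam_le_of_subset_closedBall (by positivity) <|
    closure_minimal ((connectedComponentIn_subset _ _).trans ball_subset_closedBall)
      isClosed_closedBall
  refine ⟨⟨⟨⟨C, isClosed_closure.isCompact⟩, hC.nonempty⟩, hC⟩, ?_, hdiam.trans_lt (by linarith)⟩
  exact mem_of_superset (connectedComponentIn_mem_nhds (isOpen_ball.mem_nhds hx)) subset_closure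

lemma exists_isContinuumCover (hε : 0 < ε) : ∃ s : Finset (SubCon T), IsContinuumCover s ε := by
  classical
  choose B hB hdiam using exists_subCon_mem_nhds_diam_lt (T := T) hε
  obtain ⟨t, ht⟩ := CompactSpace.elim_nhds_subcover _ hB
  refine ⟨t.image B, by simpa using fun x _ => hdiam x, fun x => ?_⟩
  obtain ⟨y, hy, hxy⟩ := mem_iUnion₂.1 (ht.ge (mem_univ x) : x ∈ ⋃ y ∈ t, (B y).1)
  exact ⟨B y, Finset.mem_image_of_mem B hy, hxy⟩

lemma exists_isContinuumCover_card_eq_continuumCoverNum (hε : 0 < ε) :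
    ∃ s : Finset (SubCon T), IsContinuumCover s ε ∧ s.card = continuumCoverNum T ε := by
  obtain ⟨s, hs⟩ := exists_isContinuumCover (T := T) hε
  exact Nat.sInf_mem (s := {k | ∃ s : Finset (SubCon T), IsContinuumCover s ε ∧ s.card = k})
    ⟨s.card, s, hs, rfl⟩

lemma packingNum_le_continuumCoverNum (hε : 0 < ε) : packingNum T ε ≤ continuumCoverNum T ε := by
  obtain ⟨P, hP, hPcard⟩ := exists_card_eq_packingNum T ε
  obtain ⟨s, ⟨hdiam, hcov⟩, hscard⟩ :=
    exists_isContinuumCover_card_eq_continuumCoverNum (T := T) hε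
  rw [← hPcard, ← hscard]
  refine Finset.card_le_card_of_forall_subsingleton (fun x B => x ∈ B.1) (fun x _ => hcov x) ?_
  rintro B hB x ⟨hx, hxB⟩ y ⟨hy, hyB⟩
  by_contra hxy
  have hle := dist_le_diam_of_mem B.1.isCompact.isBounded hxB hyB
  linarith [hP hx hy hxy, hdiam B hB]

lemma tendsto_continuumCoverNum_atTop [Infinite T] :
    Tendsto (continuumCoverNum T) (𝓝[>] 0) atTop :=
  tendsto_atTop_mono' _
    (eventually_mem_nhdsWithin.mono fun _ hε => packingNum_le_continuumCoverNum hε)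
    (tendsto_packingNum_atTop isCompact_univ.totallyBounded)

end PackingCovering

section Vietoris

variable {X Y : Type*} [TopologicalSpace X] [TopologicalSpace Y]

lemma exists_isOpen_isPreconnected_superset_disjoint_closure [NormalSpace X]
    [LocallyConnectedSpace X] {C K : Set X} (hC : IsClosed C) (hconn : IsPreconnected C)
    (hK : IsClosed K) (hCK : Disjoint C K) :
    ∃ V, IsOpen V ∧ IsPreconnected V ∧ C ⊆ V ∧ Disjoint (closure V) K := by
  obtain rfl | ⟨c, hc⟩ := C.eq_empty_or_nonempty
  · exact ⟨∅, isOpen_empty, isPreconnected_empty, Subset.rfl, by simp⟩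
  obtain ⟨W, hW, hCW, hWK⟩ :=
    normal_exists_closure_subset hC hK.isOpen_compl hCK.subset_compl_right
  exact ⟨connectedComponentIn W c, hW.connectedComponentIn, isPreconnected_connectedComponentIn,
    hconn.subset_connectedComponentIn hc hCW,
    disjoint_compl_left.mono_left ((closure_mono (connectedComponentIn_subset W c)).trans hWK)⟩

lemma exists_isOpen_disjoint_of_not_isPreconnected [T2Space Y] {P : Set Y} (hP : IsCompact P)
    (hconn : ¬ IsPreconnected P) : ∃ U V, IsOpen U ∧ IsOpen V ∧ Disjoint U V ∧ P ⊆ U ∪ V ∧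
      (P ∩ U).Nonempty ∧ (P ∩ V).Nonempty := by
  rw [isPreconnected_iff_subset_of_fully_disjoint_closed hP.isClosed] at hconn
  push Not at hconn
  obtain ⟨u, v, hu, hv, hPuv, huv, hPu, hPv⟩ := hconn
  obtain ⟨U, V, hU, hV, hPU, hPV, hUV⟩ := SeparatedNhds.of_isCompact_isCompact
    (hP.inter_right hu) (hP.inter_right hv) (huv.mono inter_subset_right inter_subset_right)
  obtain ⟨y, hyP, hyu⟩ := not_subset.1 hPu
  obtain ⟨z, hzP, hzv⟩ := not_subset.1 hPv
  exact ⟨U, V, hU, hV, hUV, fun p hp => (hPuv hp).imp (fun h => hPU ⟨hp, h⟩) fun h => hPV ⟨hp, h⟩,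
    ⟨z, hzP, hPU ⟨hzP, (hPuv hzP).resolve_right hzv⟩⟩,
    ⟨y, hyP, hPV ⟨hyP, (hPuv hyP).resolve_left hyu⟩⟩⟩

lemma isCompact_image_of_isClosed {R : Set (X × Y)} (hR : IsCompact R) {C : Set X}
    (hC : IsClosed C) : IsCompact (SetRel.image R C) := by
  convert (hR.inter_right (hC.preimage continuous_fst)).image continuous_snd using 1
  ext y
  simp [and_comm]

lemma isCompact_preimage_of_isClosed {R : Set (X × Y)} (hR : IsCompact R) {D : Set Y}
    (hD : IsClosed D) : IsCompact (SetRel.preimage R D) := by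
  convert (hR.inter_right (hD.preimage continuous_snd)).image continuous_fst using 1
  ext x
  simp [and_comm]

/- A separation of the image of `C` under `G` by open sets `U` and `V` persists under Vietoris-small
perturbations of `G` and small enlargements of `C`, so a member of `S` would inherit it. -/
lemma isPreconnected_image_of_mem_closure [T4Space X] [LocallyConnectedSpace X] [T2Space Y]
    {S : Set (NonemptyCompacts (X × Y))}
    (hS : ∀ H ∈ S, ∀ V, IsOpen V → IsPreconnected V →
      IsPreconnected (SetRel.image (H : Set (X × Y)) V))
    {G : NonemptyCompacts (X × Y)} (hG : G ∈ closure S) {C : Set X} (hC : IsClosed C)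
    (hconn : IsPreconnected C) : IsPreconnected (SetRel.image (G : Set (X × Y)) C) := by
  by_contra hnot
  obtain ⟨U, V, hU, hV, hUV, hCUV, ⟨y, ⟨x, hx, hxy⟩, hyU⟩, ⟨z, ⟨w, hw, hwz⟩, hzV⟩⟩ :=
    exists_isOpen_disjoint_of_not_isPreconnected (isCompact_image_of_isClosed G.isCompact hC) hnot
  have hUVc : IsClosed (U ∪ V)ᶜ := (hU.union hV).isClosed_compl
  have hCG : Disjoint C (SetRel.preimage (G : Set (X × Y)) (U ∪ V)ᶜ) :=
    disjoint_left.2 fun a ha ⟨b, hb, hab⟩ => hb (hCUV ⟨a, ha, hab⟩)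
  obtain ⟨D, hD, hDconn, hCD, hDG⟩ :=
    exists_isOpen_isPreconnected_superset_disjoint_closure hC hconn
      (isCompact_preimage_of_isClosed G.isCompact hUVc).isClosed hCG
  have hfar : (G : Set (X × Y)) ⊆ (closure D ×ˢ (U ∪ V)ᶜ)ᶜ := fun p hp hpD =>
    disjoint_left.1 hDG hpD.1 ⟨p.2, hpD.2, hp⟩
  obtain ⟨H, ⟨⟨hHfar, p, hpH, hpD, hpU⟩, q, hqH, hqD, hqV⟩, hHS⟩ := mem_closure_iff.1 hG _
    (((NonemptyCompacts.isOpen_subsets_of_isOpen (isClosed_closure.prod hUVc).isOpen_compl).inter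
      (NonemptyCompacts.isOpen_inter_nonempty_of_isOpen (hD.prod hU))).inter
      (NonemptyCompacts.isOpen_inter_nonempty_of_isOpen (hD.prod hV)))
    ⟨⟨hfar, (x, y), hxy, hCD hx, hyU⟩, (w, z), hwz, hCD hw, hzV⟩
  have hHUV : SetRel.image (H : Set (X × Y)) D ⊆ U ∪ V := by
    rintro b ⟨a, ha, hab⟩
    by_contra hb
    exact hHfar hab ⟨subset_closure ha, hb⟩
  obtain ⟨b, -, hbU, hbV⟩ := hS H hHS D hD hDconn U V hU hV hHUV
    ⟨p.2, ⟨p.1, hpD, hpH⟩, hpU⟩ ⟨q.2, ⟨q.1, hqD, hqH⟩, hqV⟩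
  exact disjoint_left.1 hUV hbU hbV

end Vietoris

section UpperBound

variable {T : Type*} [MetricSpace T] {f : T → T} {F : FunctionalEnvelope T → FunctionalEnvelope T}

lemma image_graphOf {X : Type*} (φ : X → X) (C : Set X) : SetRel.image (graphOf φ) C = φ '' C := by
  ext y
  simp [graphOf, eq_comm]

lemma FunctionalEnvelope.isConnected_image [LocallyConnectedSpace T] (G : FunctionalEnvelope T)
    {C : Set T} (hC : IsClosed C) (hconn : IsConnected C) :
    IsConnected (SetRel.image (G.1 : Set (T × T)) C) := by
  refine ⟨?_, isPreconnected_image_of_mem_closure ?_ G.2 hC hconn.isPreconnected⟩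
  · obtain ⟨x, hx⟩ := hconn.nonempty
    have hmeets : FunctionalEnvelope T ⊆ {H | ((H : Set (T × T)) ∩ {x} ×ˢ univ).Nonempty} :=
      closure_minimal (fun H ⟨φ, _, hH⟩ => ⟨(x, φ x), by simp [hH, graphOf]⟩) <|
        NonemptyCompacts.isClosed_inter_nonempty_of_isClosed (isClosed_singleton.prod isClosed_univ)
    obtain ⟨⟨_, y⟩, hxy, rfl, -⟩ := hmeets G.2
    exact ⟨y, _, hx, hxy⟩
  · rintro H ⟨φ, hφ, hH⟩ V - hV
    rw [hH, image_graphOf]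
    exact hV.image φ hφ.continuousOn

/-- The value on a subcontinuum of the set-valued map with graph `G`. -/
def FunctionalEnvelope.imageCon [LocallyConnectedSpace T] (B : SubCon T)
    (G : FunctionalEnvelope T) : SubCon T :=
  have hconn := isConnected_image G B.1.isCompact.isClosed B.2
  ⟨⟨⟨SetRel.image (G.1 : Set (T × T)) B.1,
    isCompact_image_of_isClosed G.1.isCompact B.1.isCompact.isClosed⟩, hconn.nonempty⟩, hconn⟩

lemma IsEnvelopeMap.semiconj_imageCon [LocallyConnectedSpace T] (hF : IsEnvelopeMap f F)
    (hf : Continuous f) (B : SubCon T) :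
    Function.Semiconj (FunctionalEnvelope.imageCon B) F (indCon f hf) := by
  intro G
  refine Subtype.ext (SetLike.coe_injective ?_)
  change SetRel.image ((F G).1 : Set (T × T)) B.1 = f '' SetRel.image (G.1 : Set (T × T)) B.1
  rw [hF]
  ext y
  simp only [SetRel.mem_image, mem_image, Prod.exists, Prod.map_apply, Prod.mk.injEq, id]
  aesop

lemma FunctionalEnvelope.exists_dist_le_of_dist_imageCon_le [LocallyConnectedSpace T] {ε : ℝ}
    {B : SubCon T} (hB : diam (B.1 : Set T) ≤ ε) {G H : FunctionalEnvelope T}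
    (h : dist (imageCon B G) (imageCon B H) ≤ ε) {p : T × T} (hp : p ∈ G.1) (hpB : p.1 ∈ B.1) :
    ∃ q ∈ H.1, dist p q ≤ ε := by
  obtain ⟨y, ⟨x, hx, hxy⟩, hdist⟩ :=
    exists_dist_le_of_dist_nonemptyCompacts_le h (p := p.2) ⟨p.1, hpB, hp⟩
  exact ⟨(x, y), hxy,
    max_le ((dist_le_diam_of_mem B.1.isCompact.isBounded hpB hx).trans hB) hdist⟩

lemma FunctionalEnvelope.dist_le_of_forall_dist_imageCon_le [LocallyConnectedSpace T] {ε : ℝ}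
    (hε : 0 ≤ ε) {s : Finset (SubCon T)} (hs : IsContinuumCover s ε) {G H : FunctionalEnvelope T}
    (h : ∀ B : s, dist (imageCon B.1 G) (imageCon B.1 H) ≤ ε) : dist G H ≤ ε := by
  refine (dist_nonemptyCompacts_le_iff hε).2 ⟨fun p hp => ?_, fun p hp => ?_⟩
  all_goals obtain ⟨B, hB, hpB⟩ := hs.2 p.1
  · exact exists_dist_le_of_dist_imageCon_le (hs.1 B hB).le (h ⟨B, hB⟩) hp hpB
  · exact exists_dist_le_of_dist_imageCon_le (hs.1 B hB).le
      (dist_comm (imageCon B G) _ ▸ h ⟨B, hB⟩) hp hpB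

lemma uniformContinuous_indCon [CompactSpace T] (hf : Continuous f) :
    UniformContinuous (indCon f hf) :=
  ((CompactSpace.uniformContinuous_of_continuous hf).nonemptyCompacts_map.comp
    uniformContinuous_subtype_val).subtype_mk _

lemma totallyBounded_univ_subCon [CompactSpace T] : TotallyBounded (univ : Set (SubCon T)) :=
  totallyBounded_preimage isUniformEmbedding_subtype_val.isUniformInducing
    isCompact_univ.totallyBounded

lemma IsEnvelopeMap.card_le_spanNum_pow [CompactSpace T] [LocallyConnectedSpace T]
    (hF : IsEnvelopeMap f F) (hf : Continuous f) {n : ℕ} {ε : ℝ} (hε : 0 < ε)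
    (E : Finset (FunctionalEnvelope T)) (hE : IsOrbitSeparated F n ε E) :
    E.card ≤ spanNum (indCon f hf) n (ε / 2) ^ continuumCoverNum T ε := by
  obtain ⟨s, hs, hscard⟩ := exists_isContinuumCover_card_eq_continuumCoverNum (T := T) hε
  obtain ⟨S, hS, hScard⟩ := exists_isOrbitSpanning_card_eq_spanNum <|
    exists_isOrbitSpanning totallyBounded_univ_subCon (uniformContinuous_indCon hf) n (half_pos hε)
  rw [← hscard, ← hScard, ← Fintype.card_coe s]
  exact hE.card_le_card_pow (fun B : s => hF.semiconj_imageCon hf B.1)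
    (fun _ _ => FunctionalEnvelope.dist_le_of_forall_dist_imageCon_le hε.le hs) hS

end UpperBound

section Interpolation

variable {X Y ι : Type*} [TopologicalSpace X] [NormalSpace X] [TopologicalSpace Y] [Finite ι]
  {K : ι → Set X}

lemma exists_continuousMap_eqOn_const_real (hK : ∀ i, IsClosed (K i))
    (hdisj : Pairwise (Function.onFun Disjoint K)) (t : ι → ℝ) :
    ∃ g : C(X, ℝ), ∀ i, ∀ x ∈ K i, g x = t i := by
  classical
  have := Fintype.ofFinite ι
  have hbump (i : ι) : ∃ g : C(X, ℝ), EqOn g 0 (⋃ j : {j // j ≠ i}, K j) ∧ EqOn g 1 (K i) := by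
    obtain ⟨g, h0, h1, -⟩ := exists_continuous_zero_one_of_isClosed
      (isClosed_iUnion_of_finite fun j : {j // j ≠ i} => hK j) (hK i)
      (disjoint_iUnion_left.2 fun j => hdisj j.2)
    exact ⟨g, h0, h1⟩
  choose g hg0 hg1 using hbump
  refine ⟨∑ i, t i • g i, fun i x hx => ?_⟩
  have hzero : ∀ j, j ≠ i → g j x = 0 := fun j hj => hg0 j (mem_iUnion.2 ⟨⟨i, hj.symm⟩, hx⟩)
  have hone : g i x = 1 := hg1 i hx
  rw [ContinuousMap.sum_apply, Finset.sum_eq_single i (by simp +contextual [hzero]) (by simp)]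
  simp [hone]

-- Compose a real function with prescribed constants on the `K i` with a path through all `c i`.
lemma exists_continuousMap_eqOn_const [PathConnectedSpace Y] (hK : ∀ i, IsClosed (K i))
    (hdisj : Pairwise (Function.onFun Disjoint K)) (c : ι → Y) :
    ∃ φ : C(X, Y), ∀ i, ∀ x ∈ K i, φ x = c i := by
  obtain ⟨y⟩ := PathConnectedSpace.nonempty (X := Y)
  obtain ⟨k, ⟨e⟩⟩ := Finite.exists_equiv_fin ι
  obtain ⟨γ, hγ⟩ := PathConnectedSpace.exists_path_through_family
    (Fin.cons y (c ∘ e.symm) : Fin (k + 1) → Y)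
  choose t ht using hγ
  obtain ⟨g, hg⟩ := exists_continuousMap_eqOn_const_real hK hdisj fun i => t (e i).succ
  refine ⟨⟨fun x => γ.extend (g x), by fun_prop⟩, fun i x hx => ?_⟩
  simpa [hg i x hx] using ht (e i).succ

end Interpolation

section LowerBound

variable {T : Type*} [MetricSpace T] {f : T → T} {F : FunctionalEnvelope T → FunctionalEnvelope T}

lemma IsEnvelopeMap.coe_apply_eq_graphOf (hF : IsEnvelopeMap f F) {G : FunctionalEnvelope T}
    {φ : T → T} (hG : (G.1 : Set (T × T)) = graphOf φ) :
    ((F G).1 : Set (T × T)) = graphOf (f ∘ φ) := by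
  rw [hF, hG]
  ext ⟨x, y⟩
  simp [graphOf, eq_comm]

lemma IsEnvelopeMap.coe_iterate_eq_graphOf (hF : IsEnvelopeMap f F) {G : FunctionalEnvelope T}
    {φ : T → T} (hG : (G.1 : Set (T × T)) = graphOf φ) (j : ℕ) :
    ((F^[j] G).1 : Set (T × T)) = graphOf (f^[j] ∘ φ) := by
  induction j with
  | zero => exact hG
  | succ j ih =>
    rw [Function.iterate_succ_apply', Function.iterate_succ', hF.coe_apply_eq_graphOf ih]
    rfl

lemma exists_functionalEnvelope_eq_graphOf [CompactSpace T] [Nonempty T] {φ : T → T}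
    (hφ : Continuous φ) : ∃ G : FunctionalEnvelope T, (G.1 : Set (T × T)) = graphOf φ := by
  have hclosed : IsClosed (graphOf φ) := isClosed_eq continuous_snd (hφ.comp continuous_fst)
  obtain ⟨x⟩ := ‹Nonempty T›
  exact ⟨⟨⟨⟨graphOf φ, hclosed.isCompact⟩, (x, φ x), rfl⟩, subset_closure ⟨φ, hφ, rfl⟩⟩, rfl⟩

lemma dist_le_of_dist_graphOf_le {G H : NonemptyCompacts (T × T)} {φ ψ : T → T}
    (hG : (G : Set (T × T)) = graphOf φ) (hH : (H : Set (T × T)) = graphOf ψ) {ε : ℝ}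
    (hGH : dist G H ≤ ε) {p b : T} (hb : ∀ x ∈ closedBall p ε, ψ x = b) : dist (φ p) b ≤ ε := by
  have hp : (p, φ p) ∈ (G : Set (T × T)) := hG ▸ rfl
  obtain ⟨⟨x, y⟩, hxy, hdist⟩ := exists_dist_le_of_dist_nonemptyCompacts_le hGH hp
  obtain rfl : y = ψ x := (hH ▸ hxy : (x, y) ∈ graphOf ψ)
  obtain ⟨hpx, hφψ⟩ := max_le_iff.1 hdist
  rwa [hb x (by rwa [mem_closedBall, dist_comm])] at hφψ

-- Each assignment `c` of points of `E` to points of `P` is realised by a continuous map that is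
-- constantly `c p` on the closed `ε`-ball about `p`; distinct assignments give separated graphs.
lemma IsEnvelopeMap.exists_isOrbitSeparated_card_eq_pow [CompactSpace T] [PathConnectedSpace T]
    (hF : IsEnvelopeMap f F) {n : ℕ} {ε : ℝ} (hε : 0 ≤ ε) {P E : Finset T}
    (hP : (P : Set T).Pairwise fun x y => 2 * ε < dist x y) (hE : IsOrbitSeparated f n ε E) :
    ∃ E', IsOrbitSeparated F n ε E' ∧ E'.card = E.card ^ P.card := by
  classical
  have hballs : Pairwise (Function.onFun Disjoint fun p : P => closedBall p.1 ε) := fun p q hpq =>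
    closedBall_disjoint_closedBall (by linarith [hP p.2 q.2 (Subtype.coe_ne_coe.2 hpq)])
  have hrealise (c : P → E) : ∃ (G : FunctionalEnvelope T) (φ : T → T),
      (G.1 : Set (T × T)) = graphOf φ ∧ ∀ p : P, ∀ x ∈ closedBall p.1 ε, φ x = c p := by
    obtain ⟨φ, hφ⟩ := exists_continuousMap_eqOn_const (fun p : P => isClosed_closedBall) hballs
      fun p => (c p : T)
    obtain ⟨G, hG⟩ := exists_functionalEnvelope_eq_graphOf φ.continuous
    exact ⟨G, φ, hG, hφ⟩
  choose Γ φ hΓ hφ using hrealise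
  have hsep (c c' : P → E) (hne : c ≠ c') : ∃ j < n, ε < dist (F^[j] (Γ c)) (F^[j] (Γ c')) := by
    obtain ⟨p, hp⟩ := Function.ne_iff.1 hne
    obtain ⟨j, hj, hlt⟩ := hE (c p).2 (c' p).2 (Subtype.coe_ne_coe.2 hp)
    refine ⟨j, hj, lt_of_not_ge fun hle => hlt.not_ge ?_⟩
    have hdist := dist_le_of_dist_graphOf_le (hF.coe_iterate_eq_graphOf (hΓ c) j)
      (hF.coe_iterate_eq_graphOf (hΓ c') j) hle (p := p) (b := f^[j] (c' p))
      fun x hx => congrArg f^[j] (hφ c' p x hx)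
    rwa [Function.comp_apply, hφ c p p (mem_closedBall_self hε)] at hdist
  have hinj : Function.Injective Γ := by
    intro c c' heq
    by_contra hne
    obtain ⟨j, -, hlt⟩ := hsep c c' hne
    rw [heq, dist_self] at hlt
    exact hlt.not_ge hε
  refine ⟨Finset.univ.image Γ, ?_, by simp [Finset.card_image_of_injective _ hinj]⟩
  simp only [IsOrbitSeparated, Finset.coe_image, Finset.coe_univ, image_univ]
  rintro _ ⟨c, rfl⟩ _ ⟨c', rfl⟩ hne
  exact hsep c c' (ne_of_apply_ne Γ hne)

lemma IsEnvelopeMap.sepNum_pow_packingNum_le [CompactSpace T] [PathConnectedSpace T]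
    [LocallyConnectedSpace T] (hF : IsEnvelopeMap f F) (hf : Continuous f) {n : ℕ} {ε : ℝ}
    (hε : 0 < ε) : sepNum f n ε ^ packingNum T (2 * ε) ≤ sepNum F n ε := by
  obtain ⟨P, hP, hPcard⟩ := exists_card_eq_packingNum T (2 * ε)
  obtain ⟨E, hE, hEcard⟩ := exists_isOrbitSeparated_card_eq_sepNum f n ε
  obtain ⟨E', hE', hcard⟩ := hF.exists_isOrbitSeparated_card_eq_pow hε.le hP hE
  rw [← hPcard, ← hEcard, ← hcard]
  exact hE'.card_le_sepNum (hF.card_le_spanNum_pow hf hε)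

end LowerBound

section Trees

variable {T : Type*} [MetricSpace T]

lemma IsTreeSpace.pathConnectedSpace (hT : IsTreeSpace T) : PathConnectedSpace T where
  nonempty := hT.conn.toNonempty
  joined x y := by
    obtain rfl | hxy := eq_or_ne x y
    · exact Joined.refl x
    · obtain ⟨A, ⟨e, h0, h1⟩, -⟩ := hT.uniqueArc x y hxy
      exact ⟨⟨⟨fun t => (e t : T), by fun_prop⟩, h0, h1⟩⟩

lemma locallyConnectedSpace_of_sUnion_isArc {X : Type*} [TopologicalSpace X] [T2Space X]
    {s : Set (Set X)} (hfin : s.Finite) (hs : ∀ A ∈ s, IsArc A) (hcov : ⋃₀ s = univ) :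
    LocallyConnectedSpace X := by
  have : LocallyConnectedSpace (Icc (0 : ℝ) 1) :=
    (isQuotientMap_projIcc (h := zero_le_one)).isCoinducing.locallyConnectedSpace
  have := hfin.to_subtype
  let e (A : s) : Icc (0 : ℝ) 1 ≃ₜ A.1 := (hs A A.2).some
  let := (⊥ : TopologicalSpace s)
  have : DiscreteTopology s := ⟨rfl⟩
  let glue (p : s × Icc (0 : ℝ) 1) : X := e p.1 p.2
  have hglue : Continuous glue := continuous_prod_of_discrete_left.2 fun A =>
    continuous_subtype_val.comp (e A).continuous
  have hsurj : Function.Surjective glue := fun x => by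
    obtain ⟨A, hA, hx⟩ := hcov.ge (mem_univ x)
    exact ⟨(⟨A, hA⟩, (e ⟨A, hA⟩).symm ⟨x, hx⟩), by simp [glue]⟩
  exact (IsQuotientMap.of_surjective_continuous hsurj hglue).isCoinducing.locallyConnectedSpace

lemma IsTreeSpace.locallyConnectedSpace (hT : IsTreeSpace T) : LocallyConnectedSpace T := by
  obtain ⟨x, hx⟩ | ⟨s, hs, hcov⟩ := hT.finiteArcs
  · have : Subsingleton T := subsingleton_of_univ_subsingleton (hx ▸ subsingleton_singleton)
    infer_instance
  · exact locallyConnectedSpace_of_sUnion_isArc s.finite_toSet hs hcov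

end Trees

theorem sep_span_inequalities_general {T : Type*} [MetricSpace T] [CompactSpace T]
    [PathConnectedSpace T] [LocallyConnectedSpace T] (f : T → T) (hf : Continuous f)
    (F : ↥(FunctionalEnvelope T) → ↥(FunctionalEnvelope T)) (hF : IsEnvelopeMap f F) :
    ∃ N1 N2 : ℝ → ℕ,
      Tendsto N1 (𝓝[>] (0 : ℝ)) atTop ∧ Tendsto N2 (𝓝[>] (0 : ℝ)) atTop ∧
      ∀ ε : ℝ, 0 < ε → ∀ n : ℕ,
        sepNum f n ε ^ N1 ε ≤ sepNum F n ε ∧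
        sepNum F n ε ≤ spanNum (indCon f hf) n (ε / 2) ^ N2 ε := by
  obtain _ | _ := subsingleton_or_nontrivial T
  · have hN : Tendsto (fun ε : ℝ => ⌊ε⁻¹⌋₊) (𝓝[>] 0) atTop :=
      tendsto_nat_floor_atTop.comp tendsto_inv_nhdsGT_zero
    refine ⟨_, _, hN, hN, fun ε hε n => ?_⟩
    have : Nonempty (FunctionalEnvelope T) :=
      (exists_functionalEnvelope_eq_graphOf (continuous_id (X := T))).nonempty
    have : Nonempty (SubCon T) := ⟨{Classical.arbitrary T}, isConnected_singleton⟩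
    simp [sepNum_of_subsingleton, spanNum_of_subsingleton _ _ (half_pos hε).le]
  · have := PreconnectedSpace.infinite (X := T)
    have hdouble : Tendsto (fun ε : ℝ => 2 * ε) (𝓝[>] 0) (𝓝[>] 0) := by
      simpa using TendstoNhdsWithinIoi.const_mul two_pos (tendsto_id (x := 𝓝[>] (0 : ℝ)))
    exact ⟨fun ε => packingNum T (2 * ε), continuumCoverNum T,
      (tendsto_packingNum_atTop isCompact_univ.totallyBounded).comp hdouble,
      tendsto_continuumCoverNum_atTop, fun ε hε n =>
        ⟨hF.sepNum_pow_packingNum_le hf hε, sepNum_le (hF.card_le_spanNum_pow hf hε)⟩⟩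

/-- separated/spanning estimates between the base system, its
connected envelope, and its functional envelope. -/
theorem sep_span_inequalities {T : Type*} [MetricSpace T]
    (hT : IsTreeSpace T) (f : T → T) (hf : Continuous f)
    (F : ↥(FunctionalEnvelope T) → ↥(FunctionalEnvelope T))
    (hF : IsEnvelopeMap f F) :
    ∃ N1 N2 : ℝ → ℕ,
      Tendsto N1 (𝓝[>] (0 : ℝ)) atTop ∧ Tendsto N2 (𝓝[>] (0 : ℝ)) atTop ∧
      ∀ ε : ℝ, 0 < ε → ∀ n : ℕ, 1 ≤ n →
        sepNum f n ε ^ N1 ε ≤ sepNum F n ε ∧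
        sepNum F n ε ≤ spanNum (indCon f hf) n (ε / 2) ^ N2 ε := by
  have := hT.compact
  have := hT.pathConnectedSpace
  have := hT.locallyConnectedSpace
  obtain ⟨N1, N2, hN1, hN2, h⟩ := sep_span_inequalities_general f hf F hF
  exact ⟨N1, N2, hN1, hN2, fun ε hε n _ => h ε hε n⟩
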